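/- arXiv:math-ph/0303035 — 5 statements merged into one kernel-verified Lean document; each statement's English description precedes it below -/
import Mathlib

section
/- Let k be a commutative ring, n ≥ 1, m ≥ 1, and let A : Fin m → Matrix (Fin n) (Fin n) k be matrices each of which coincides with the identity matrix in every row except the last row. Write b s q := A s (Fin.last) q for q ≠ Fin.last and d s := A s (Fin.last) (Fin.last). Then the product P = A (m-1) * ⋯ * A 1 * A 0 satisfies, for every column index q ≠ Fin.last: P (Fin.last) q = ∑_{s=0}^{m-1} ( ∏_{t=s+1}^{m-1} d t ) * b s q. -/
theorem aux_rows (k : Type*) [CommRing k] (n m : ℕ)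
    (A : Fin m → Matrix (Fin (n + 1)) (Fin (n + 1)) k)
    (hA : ∀ s, ∀ i, i ≠ Fin.last n → ∀ j,
      A s i j = (1 : Matrix (Fin (n + 1)) (Fin (n + 1)) k) i j)
    (i : Fin (n + 1)) (hi : i ≠ Fin.last n) (j : Fin (n + 1)) :
    (List.ofFn A).reverse.prod i j = (1 : Matrix (Fin (n + 1)) (Fin (n + 1)) k) i j := by
  induction m with
  | zero => simp
  | succ m ih =>
    rw [List.ofFn_succ', List.concat_eq_append, List.reverse_append, List.reverse_singleton,
      List.singleton_append, List.prod_cons, Matrix.mul_apply]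
    simp only [hA _ i hi, Matrix.one_apply, ite_mul, one_mul, zero_mul, Finset.sum_ite_eq,
      Finset.mem_univ, if_true]
    rw [ih (fun s => A s.castSucc) (fun s => hA _), Matrix.one_apply]

theorem aux_ioi (k : Type*) [CommRing k] (m : ℕ) (f : Fin (m + 1) → k) (s : Fin m) :
    ∏ t ∈ Finset.Ioi s.castSucc, f t = f (Fin.last m) * ∏ t ∈ Finset.Ioi s, f t.castSucc := by
  have h1 : Finset.Ioi s.castSucc = Finset.univ.filter (fun t => s.castSucc < t) := by
    ext; simp
  have h2 : Finset.Ioi s = Finset.univ.filter (fun t => s < t) := by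
    ext; simp
  rw [h1, h2, Finset.prod_filter, Finset.prod_filter, Fin.prod_univ_castSucc, mul_comm]
  simp [Fin.castSucc_lt_last]

theorem aux_main (k : Type*) [CommRing k] (n m : ℕ)
    (A : Fin m → Matrix (Fin (n + 1)) (Fin (n + 1)) k)
    (hA : ∀ s, ∀ i, i ≠ Fin.last n → ∀ j,
      A s i j = (1 : Matrix (Fin (n + 1)) (Fin (n + 1)) k) i j)
    (q : Fin (n + 1)) (hq : q ≠ Fin.last n) :
    (List.ofFn A).reverse.prod (Fin.last n) q
      = ∑ s : Fin m,
          (∏ t ∈ Finset.Ioi s, A t (Fin.last n) (Fin.last n))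
            * A s (Fin.last n) q := by
  induction m with
  | zero => simp [Matrix.one_apply, hq.symm]
  | succ m ih =>
    rw [List.ofFn_succ', List.concat_eq_append, List.reverse_append, List.reverse_singleton,
      List.singleton_append, List.prod_cons, Matrix.mul_apply, Fin.sum_univ_castSucc,
      ih (fun s => A s.castSucc) (fun s => hA _), Fin.sum_univ_castSucc]
    have hl : Finset.Ioi (Fin.last m) = ∅ := by
      ext x; simpa using Fin.le_last x
    obtain ⟨r, rfl⟩ := Fin.exists_castSucc_eq.2 hq
    simp only [aux_ioi k m (fun t => A t (Fin.last n) (Fin.last n)), hl, Finset.prod_empty, one_mul,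
      aux_rows k n m (fun s => A s.castSucc) (fun s => hA _) _ (Fin.castSucc_lt_last _).ne,
      Matrix.one_apply, Finset.mul_sum, mul_assoc]
    rw [add_comm]
    simp

/-- The explicit formula of Lemma 2 for the off-diagonal entries of the last
row of a product `A_{m-1} ⋯ A_1 A_0` of matrices each equal to the identity
except in the last row: writing `b s q = A s last q` (for `q ≠ last`) and
`d s = A s last last`, the entry is `∑_s (∏_{t>s} d t) * b s q`. -/
theorem lastRow_entry_of_prod (k : Type*) [CommRing k] (n m : ℕ) (hm : 1 ≤ m)
    (A : Fin m → Matrix (Fin (n + 1)) (Fin (n + 1)) k)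
    (hA : ∀ s, ∀ i, i ≠ Fin.last n → ∀ j,
      A s i j = (1 : Matrix (Fin (n + 1)) (Fin (n + 1)) k) i j)
    (q : Fin (n + 1)) (hq : q ≠ Fin.last n) :
    (List.ofFn A).reverse.prod (Fin.last n) q
      = ∑ s : Fin m,
          (∏ t ∈ Finset.Ioi s, A t (Fin.last n) (Fin.last n))
            * A s (Fin.last n) q := by
  exact aux_main k n m A hA q hq
end

section
/- Let k be a field, m ∈ ℕ, and let b, d : ℕ → k, h : ℕ → kˣ and g ∈ kˣ. Define α := ∑_{s=0}^{m} ( ∏_{t=s+1}^{m} d t ) * b s. Define the gauge-transformed data b' s := (g * (h s)⁻¹ : k) * b s and d' t := ((h (t-1)) * (h t)⁻¹ : k) * d t for t ≥ 1, and α' := ∑_{s=0}^{m} ( ∏_{t=s+1}^{m} d' t ) * b' s. Then α' = (g * (h m)⁻¹ : k) * α. -/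
/-- The gauge-transformation claim of Lemma 2: under the abelian gauge
transformation `b s ↦ (g / h s) * b s`, `d t ↦ (h (t-1) / h t) * d t`, the
curvature coefficient `α = ∑_{s ≤ m} (∏_{s < t ≤ m} d t) * b s` transforms as
`α ↦ (g / h m) * α`. -/
theorem curvature_coefficient_gauge (k : Type*) [Field k] (m : ℕ)
    (b d : ℕ → k) (h : ℕ → kˣ) (g : kˣ)
    (α : k)
    (hα : α = ∑ s ∈ Finset.range (m + 1), (∏ t ∈ Finset.Icc (s + 1) m, d t) * b s)
    (b' d' : ℕ → k)
    (hb' : ∀ s, b' s = ((g : k) * (((h s)⁻¹ : kˣ) : k)) * b s)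
    (hd' : ∀ t, 1 ≤ t → d' t = ((h (t - 1) : k) * (((h t)⁻¹ : kˣ) : k)) * d t)
    (α' : k)
    (hα' : α' = ∑ s ∈ Finset.range (m + 1), (∏ t ∈ Finset.Icc (s + 1) m, d' t) * b' s) :
    α' = ((g : k) * (((h m)⁻¹ : kˣ) : k)) * α := by
  have key : ∀ s n : ℕ, s ≤ n → ∏ t ∈ Finset.Icc (s + 1) n, d' t
      = ((h s : k) * (((h n)⁻¹ : kˣ) : k)) * ∏ t ∈ Finset.Icc (s + 1) n, d t := by
    intro s n hn
    induction n, hn using Nat.le_induction with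
    | base => simp
    | succ n hn ih =>
      rw [Finset.prod_Icc_succ_top (by omega), Finset.prod_Icc_succ_top (by omega), ih,
        hd' (n + 1) (by omega), Nat.add_sub_cancel]
      have e : (((h n)⁻¹ : kˣ) : k) * (h n : k) = 1 := Units.inv_mul _
      linear_combination ((h s : k) * (((h (n + 1))⁻¹ : kˣ) : k) *
        (∏ t ∈ Finset.Icc (s + 1) n, d t) * d (n + 1)) * e
  rw [hα', hα, Finset.mul_sum]
  refine Finset.sum_congr rfl fun s hs => ?_
  rw [key s m (by have := Finset.mem_range.mp hs; omega), hb']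
  have e : (((h s)⁻¹ : kˣ) : k) * (h s : k) = 1 := Units.inv_mul _
  linear_combination ((g : k) * (((h m)⁻¹ : kˣ) : k) *
    (∏ t ∈ Finset.Icc (s + 1) m, d t) * b s) * e
end

section
/- Let k be a field, m ≥ 1, and r : ZMod m → kˣ. Define μ := (-1)^m * ∏_{p : ZMod m} (r p : k), and for each p ∈ ZMod m define α p := ∑_{k=0}^{m-1} (-1)^k * ∏_{j=0}^{k} (r (p - j) : k). Then for every p ∈ ZMod m: α (p+1) = (r (p+1) : k) * (1 - μ - α p). -/
/-- The recursion of Lemma 3 relating consecutive gauge-invariant curvature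
coefficients: with `μ = (-1)^m ∏_p r p` and
`α p = ∑_{k<m} (-1)^k ∏_{j≤k} r (p - j)`, one has
`α (p+1) = r (p+1) * (1 - μ - α p)`. -/
theorem alpha_star_recursion (k : Type*) [Field k] (m : ℕ) [NeZero m]
    (r : ZMod m → kˣ)
    (μ : k) (hμ : μ = (-1 : k) ^ m * ∏ p, (r p : k))
    (α : ZMod m → k)
    (hα : ∀ p, α p = ∑ i ∈ Finset.range m,
      (-1 : k) ^ i * ∏ j ∈ Finset.range (i + 1), (r (p - (j : ZMod m)) : k))
    (p : ZMod m) :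
    α (p + 1) = (r (p + 1) : k) * (1 - μ - α p) := by
  have hP : ∏ q, (r q : k) = ∏ j ∈ Finset.range m, (r (p - (j : ZMod m)) : k) := by
    symm
    refine Finset.prod_bij (fun (j : ℕ) _ => p - (j : ZMod m)) (fun _ _ => Finset.mem_univ _)
      ?_ ?_ (fun _ _ => rfl)
    · intro a ha b hb hab
      have h : (a : ZMod m) = (b : ZMod m) := sub_right_injective hab
      have h2 := congrArg ZMod.val h
      rwa [ZMod.val_cast_of_lt (Finset.mem_range.mp ha),
        ZMod.val_cast_of_lt (Finset.mem_range.mp hb)] at h2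
    · intro q _
      refine ⟨(p - q).val, Finset.mem_range.mpr (ZMod.val_lt _), ?_⟩
      simp
  have key : ∀ n : ℕ, ∑ i ∈ Finset.range n,
      (-1 : k) ^ i * ∏ j ∈ Finset.range (i + 1), (r (p + 1 - (j : ZMod m)) : k)
      = (r (p + 1) : k) * (1 - (-1 : k) ^ n * ∏ j ∈ Finset.range n, (r (p - (j : ZMod m)) : k)
        - ∑ i ∈ Finset.range n,
          (-1 : k) ^ i * ∏ j ∈ Finset.range (i + 1), (r (p - (j : ZMod m)) : k)) := by
    intro n
    induction n with
    | zero => simp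
    | succ n ih =>
      rw [Finset.sum_range_succ, Finset.sum_range_succ, ih, Finset.prod_range_succ' _ n]
      have h : ∀ j : ℕ, p + 1 - ((j + 1 : ℕ) : ZMod m) = p - (j : ZMod m) := by
        intro j; push_cast; ring
      simp only [h, Nat.cast_zero, sub_zero]
      ring
  rw [hα (p + 1), hα p, hμ, hP]
  exact key m
end

section
/- Let k be a field, m ≥ 1, and r : ZMod m → kˣ. For p ∈ ZMod m define α p := ∑_{k=0}^{m-1} (-1)^k * ∏_{j=0}^{k} (r (p - j) : k), and suppose the local unimodularity condition (-1)^m * ∏_{p} (r p : k) = 1 holds. Then for all p, p' ∈ ZMod m: α p = 0 if and only if α p' = 0. -/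
/-- Corollary 1: for locally unimodular connections (`μ_σ = (-1)^m ∏_p r p = 1`),
the vanishing of the curvature coefficient `α p` does not depend on the initial
point `p` in the star. -/
theorem flatness_independent_of_basepoint (k : Type*) [Field k] (m : ℕ) [NeZero m]
    (r : ZMod m → kˣ)
    (α : ZMod m → k)
    (hα : ∀ p, α p = ∑ i ∈ Finset.range m,
      (-1 : k) ^ i * ∏ j ∈ Finset.range (i + 1), (r (p - (j : ZMod m)) : k))
    (hsl : (-1 : k) ^ m * ∏ p, (r p : k) = 1) :
    ∀ p p' : ZMod m, α p = 0 ↔ α p' = 0 := by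
  have hprod : ∀ q : ZMod m, ∏ j ∈ Finset.range m, (r (q - (j : ZMod m)) : k) = ∏ p, (r p : k) := by
    intro q
    refine Finset.prod_bij (fun j _ => q - (j : ZMod m)) (fun _ _ => Finset.mem_univ _) ?_ ?_
      (fun _ _ => rfl)
    · intro a ha b hb hab
      have h : (a : ZMod m) = (b : ZMod m) := sub_right_injective hab
      rw [ZMod.natCast_eq_natCast_iff'] at h
      rwa [Nat.mod_eq_of_lt (Finset.mem_range.mp ha),
        Nat.mod_eq_of_lt (Finset.mem_range.mp hb)] at h
    · intro b _
      refine ⟨(q - b).val, Finset.mem_range.mpr (ZMod.val_lt _), ?_⟩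
      simp
  have key : ∀ p i, ∏ j ∈ Finset.range (i + 1), (r (p - (j : ZMod m)) : k)
      = (∏ j ∈ Finset.range i, (r (p - 1 - (j : ZMod m)) : k)) * r p := by
    intro p i
    rw [Finset.prod_range_succ']
    simp [sub_sub, add_comm]
  have step : ∀ p, α p = - (r p : k) * α (p - 1) := by
    intro p
    have h1 := Finset.sum_range_succ (fun i => (-1 : k) ^ i *
      ∏ j ∈ Finset.range (i + 1), (r (p - (j : ZMod m)) : k)) m
    rw [Finset.sum_range_succ', ← hα p, key p m, hprod, ← mul_assoc, hsl] at h1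
    have h2 : ∑ i ∈ Finset.range m, (-1 : k) ^ (i + 1) *
        ∏ j ∈ Finset.range (i + 1 + 1), (r (p - (j : ZMod m)) : k)
        = - (r p : k) * α (p - 1) := by
      rw [hα (p - 1), Finset.mul_sum]
      refine Finset.sum_congr rfl fun i _ => ?_
      rw [key p (i + 1)]
      ring
    rw [h2] at h1
    simp at h1
    rw [← h1]
    ring
  have hiff : ∀ p, α p = 0 ↔ α (p - 1) = 0 := by
    intro p
    rw [step p]
    simp
  have hn : ∀ (n : ℕ) p, α p = 0 ↔ α (p - n) = 0 := by
    intro n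
    induction n with
    | zero => simp
    | succ n ih =>
      intro p
      rw [ih p, hiff, sub_sub]
      push_cast
      rfl
  intro p p'
  have h := hn (p - p').val p
  simpa using h
end

section
/- Let k be a field, m ≥ 1, and r : ZMod m → kˣ. Define μ := (-1)^m * ∏_{p} (r p : k) and α p := ∑_{k=0}^{m-1} (-1)^k * ∏_{j=0}^{k} (r (p - j) : k). If α (p+1) ≠ 0, then 1 - μ - α p ≠ 0 and (r (p+1) : k) = α (p+1) / (1 - μ - α p). In particular, for generic connections (all α p ≠ 0) the data r is uniquely determined by the curvature coefficients α and μ. -/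
/-- Corollary 2: for generic connections the gauge-invariant data `r` can be
reconstructed from the curvature coefficients: if `α (p+1) ≠ 0` then
`1 - μ - α p ≠ 0` and `r (p+1) = α (p+1) / (1 - μ - α p)`. -/
theorem reconstruction_of_rho_from_curvature (k : Type*) [Field k] (m : ℕ) [NeZero m]
    (r : ZMod m → kˣ)
    (μ : k) (hμ : μ = (-1 : k) ^ m * ∏ p, (r p : k))
    (α : ZMod m → k)
    (hα : ∀ p, α p = ∑ i ∈ Finset.range m,
      (-1 : k) ^ i * ∏ j ∈ Finset.range (i + 1), (r (p - (j : ZMod m)) : k))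
    (p : ZMod m) (hne : α (p + 1) ≠ 0) :
    1 - μ - α p ≠ 0 ∧ (r (p + 1) : k) = α (p + 1) / (1 - μ - α p) := by
  have hP : ∏ j ∈ Finset.range m, (r (p - (j : ZMod m)) : k) = ∏ q, (r q : k) := by
    refine Finset.prod_nbij' (fun j => p - (j : ZMod m)) (fun q => (p - q).val) ?_ ?_ ?_ ?_ ?_
    · intro a _
      exact Finset.mem_univ _
    · intro q _
      exact Finset.mem_range.2 (ZMod.val_lt _)
    · intro a ha
      simp [ZMod.val_cast_of_lt (Finset.mem_range.1 ha)]
    · intro q _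
      simp
    · intro a _
      rfl
  set P : ℕ → k := fun i => ∏ j ∈ Finset.range i, (r (p - (j : ZMod m)) : k) with hPdef
  have h1 : α (p + 1) = (r (p + 1) : k) * ∑ i ∈ Finset.range m, (-1 : k) ^ i * P i := by
    rw [hα, Finset.mul_sum]
    refine Finset.sum_congr rfl fun i _ => ?_
    rw [Finset.prod_range_succ']
    have : ∀ j : ℕ, p + 1 - ((j + 1 : ℕ) : ZMod m) = p - (j : ZMod m) := by
      intro j
      push_cast
      ring
    simp only [this, hPdef, Nat.cast_zero, sub_zero]
    ring
  have h2 : ∑ i ∈ Finset.range m, (-1 : k) ^ i * P i = 1 - μ - α p := by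
    have e1 := Finset.sum_range_succ (fun i => (-1 : k) ^ i * P i) m
    have e2 := Finset.sum_range_succ' (fun i => (-1 : k) ^ i * P i) m
    have e3 : ∑ i ∈ Finset.range m, (-1 : k) ^ (i + 1) * P (i + 1) = - α p := by
      rw [hα, ← Finset.sum_neg_distrib]
      refine Finset.sum_congr rfl fun i _ => ?_
      simp only [hPdef]
      ring
    have e4 : (-1 : k) ^ m * P m = μ := by rw [hμ, ← hP]
    have e5 : (-1 : k) ^ 0 * P 0 = 1 := by simp [hPdef]
    rw [e3, e5] at e2
    rw [e4] at e1
    linear_combination e2 - e1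
  rw [h2] at h1
  have h3 : 1 - μ - α p ≠ 0 := by
    intro h
    apply hne
    rw [h1, h, mul_zero]
  exact ⟨h3, by rw [h1, mul_div_cancel_right₀ _ h3]⟩
end
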